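/- Let k, ℓ be integers with k + ℓ ≥ 2 and let τ = u + iv with v > 0. Then Σ_{m ∈ ℤ} 1/((τ+m)^k (τ̄+m)^ℓ) = (-2πi) Σ_{0 ≤ r ≤ k-1, n ≥ 0} [C(-ℓ, r)(-2πin)^{k-1-r} e^{2πinτ}] / [(-2iv)^{ℓ+r}(k-1-r)!] + (2πi) Σ_{0 ≤ r ≤ ℓ-1, n < 0} [C(-k, r)(-2πin)^{ℓ-1-r} e^{2πinτ̄}] / [(2iv)^{k+r}(ℓ-1-r)!], where C(X,r) = X(X-1)···(X-r+1)/r! is the formal binomial coefficient. -/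

import Mathlib

open Complex Real

/-- The formal binomial coefficient `C(x, r) = x(x-1)⋯(x-r+1)/r!`. -/
noncomputable def fchoose (x : ℂ) (r : ℕ) : ℂ :=
  (∏ i ∈ Finset.range r, (x - i)) / (r.factorial : ℂ)

/-!
For fixed `n`, the sum over `r` multiplying `e^{2πinτ}` is the residue at `-τ` of
`φ_n(z) = e^{-2πinz} / ((z + τ)^k (z + σ)^l)`, where `σ` plays the part of the conjugate of `τ`.
Dividing `τ - σ = (τ + m) - (σ + m)` by `(τ + m)^k (σ + m)^l` gives a recurrence in `(k, l)` for the
summands on the left, and residues inherit it. Two families having the same sum is a linear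
condition, so the recurrence propagates the formula to all `k + l ≥ 2` from the classical Lipschitz
formula (one exponent zero) and the partial fraction expansion of the cotangent (`k = l = 1`).
-/

theorem fchoose_eq_choose (x : ℂ) (r : ℕ) : fchoose x r = Ring.choose x r := by
  rw [fchoose, Ring.choose_eq_smul, ← Polynomial.aeval_eq_smeval, Polynomial.aeval_def,
    Polynomial.eval₂_eq_eval_map, descPochhammer_map, descPochhammer_eval_eq_prod_range,
    smul_eq_mul, div_eq_inv_mul]

section PoleResidue

/-- The residue at `z = -τ` of `e^{-2πinz} / ((z + τ)^k (z + σ)^l)`, computed by expanding the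
exponential and `(z + σ)^{-l}` in powers of `z + τ`. The residue at `z = -σ` is
`poleResidue σ τ l k n`. -/
noncomputable def poleResidue (τ σ : ℂ) (k l n : ℤ) : ℂ :=
  ∑ r ∈ Finset.range k.toNat,
    fchoose (-l : ℂ) r * (-(2 * π * I * n)) ^ (k.toNat - 1 - r) * Complex.exp (2 * π * I * n * τ) /
      ((σ - τ) ^ (l + r) * ((k.toNat - 1 - r).factorial : ℂ))

variable (τ σ : ℂ) (l n : ℤ)

theorem poleResidue_of_nonpos {k : ℤ} (hk : k ≤ 0) : poleResidue τ σ k l n = 0 := by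
  simp [poleResidue, Int.toNat_of_nonpos hk]

theorem poleResidue_natCast_succ_zero (p : ℕ) :
    poleResidue τ σ (p + 1 : ℕ) 0 n =
      (-(2 * π * I * n)) ^ p * Complex.exp (2 * π * I * n * τ) / p.factorial := by
  simp [poleResidue, Finset.sum_range_succ', fchoose_eq_choose]

theorem poleResidue_one_one :
    poleResidue τ σ 1 1 n = Complex.exp (2 * π * I * n * τ) / (σ - τ) := by
  simp [poleResidue, fchoose_eq_choose]

variable {τ σ}

theorem sub_mul_poleResidue_natCast_succ (h : σ - τ ≠ 0) (p : ℕ) :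
    (σ - τ) * poleResidue τ σ (p + 1 : ℕ) l n =
      poleResidue τ σ (p + 1 : ℕ) (l - 1) n - poleResidue τ σ p l n := by
  have cancel (q : ℂ) (d : ℕ) (e : ℤ) :
      (σ - τ) * (q / ((σ - τ) ^ (e + 1) * d)) = q / ((σ - τ) ^ e * d) := by
    rw [zpow_add_one₀ h]
    field_simp
  have pascal (r : ℕ) : fchoose (-((l - 1 : ℤ) : ℂ)) (r + 1) =
      fchoose (-l : ℂ) r + fchoose (-l : ℂ) (r + 1) := by
    rw [show (-((l - 1 : ℤ) : ℂ)) = -(l : ℂ) + 1 by push_cast; ring]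
    simp only [fchoose_eq_choose, Ring.choose_succ_succ]
  simp only [poleResidue, Int.toNat_natCast, Nat.add_sub_cancel]
  rw [Finset.sum_range_succ', Finset.sum_range_succ', mul_add, Finset.mul_sum, add_sub_right_comm,
    ← Finset.sum_sub_distrib]
  congr 1
  · refine Finset.sum_congr rfl fun r _ ↦ ?_
    rw [pascal, show l + ((r + 1 : ℕ) : ℤ) = l + r + 1 by push_cast; ring, cancel,
      show l - 1 + ((r + 1 : ℕ) : ℤ) = l + r by push_cast; ring,
      show p - 1 - r = p - (r + 1) by omega]
    ring
  · rw [show l + ((0 : ℕ) : ℤ) = l - 1 + ((0 : ℕ) : ℤ) + 1 by ring, cancel]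
    simp only [fchoose_eq_choose, Ring.choose_zero_right]

theorem sub_mul_poleResidue (h : σ - τ ≠ 0) (k : ℤ) :
    (σ - τ) * poleResidue τ σ k l n =
      poleResidue τ σ k (l - 1) n - poleResidue τ σ (k - 1) l n := by
  rcases le_or_gt k 0 with hk | hk
  · simp [poleResidue_of_nonpos _ _ _ _ hk,
      poleResidue_of_nonpos _ _ _ _ (show k - 1 ≤ 0 by omega)]
  · obtain ⟨p, rfl⟩ : ∃ p : ℕ, k = (p + 1 : ℕ) := ⟨(k - 1).toNat, by omega⟩
    simpa using sub_mul_poleResidue_natCast_succ l n h p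

end PoleResidue

/-- The pairs of families that are both summable, with the same sum. -/
def equalSums (R ι κ M : Type*) [Semiring R] [AddCommMonoid M] [Module R M] [TopologicalSpace M]
    [ContinuousAdd M] [ContinuousConstSMul R M] : Submodule R ((ι → M) × (κ → M)) where
  carrier := {p | ∃ s, HasSum p.1 s ∧ HasSum p.2 s}
  zero_mem' := ⟨0, hasSum_zero, hasSum_zero⟩
  add_mem' := fun ⟨s, hs₁, hs₂⟩ ⟨t, ht₁, ht₂⟩ ↦ ⟨s + t, hs₁.add ht₁, hs₂.add ht₂⟩
  smul_mem' := fun c _ ⟨s, hs₁, hs₂⟩ ↦ ⟨c • s, hs₁.const_smul c, hs₂.const_smul c⟩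

section TwoExponentRecurrence

variable {R M : Type*} [AddCommGroup M] {x : ℤ → ℤ → M}

theorem mem_of_nonpos_right [Ring R] [Module R M] {P : Submodule R M} {a : R}
    (h : ∀ k l, a • x k l = x (k - 1) l - x k (l - 1)) (hk : ∀ k, 2 ≤ k → x k 0 ∈ P)
    {k l : ℤ} (hl : l ≤ 0) (hkl : 2 ≤ k + l) : x k l ∈ P := by
  induction l, hl using Int.leInductionDown generalizing k with
  | base => exact hk k (by omega)
  | pred l _ ih =>
    rw [show x k (l - 1) = x (k - 1) l - a • x k l by rw [h, sub_sub_cancel]]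
    exact P.sub_mem (ih (by omega)) (P.smul_mem a (ih (by omega)))

theorem mem_of_two_le_add [DivisionRing R] [Module R M] {P : Submodule R M} {a : R} (ha : a ≠ 0)
    (h : ∀ k l, a • x k l = x (k - 1) l - x k (l - 1)) (hk : ∀ k, 2 ≤ k → x k 0 ∈ P)
    (hl : ∀ l, 2 ≤ l → x 0 l ∈ P) (h11 : x 1 1 ∈ P) {k l : ℤ} (hkl : 2 ≤ k + l) : x k l ∈ P := by
  induction hd : (k + l - 2).toNat generalizing k l with
  | zero =>
    rcases le_or_gt l 0 with hl0 | hl0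
    · exact mem_of_nonpos_right h hk hl0 hkl
    rcases le_or_gt k 0 with hk0 | hk0
    · exact mem_of_nonpos_right (x := fun k l ↦ x l k) (a := -a)
        (fun k l ↦ by rw [neg_smul, h, neg_sub]) hl hk0 (by omega)
    obtain ⟨rfl, rfl⟩ : k = 1 ∧ l = 1 := by omega
    exact h11
  | succ d ih =>
    rw [← P.smul_mem_iff ha, h]
    exact P.sub_mem (ih (by omega) (by omega)) (ih (by omega) (by omega))

end TwoExponentRecurrence

section OnePole

theorem exp_two_pi_I_natCast_mul (n : ℕ) (z : ℂ) :
    Complex.exp (2 * π * I * n * z) = Complex.exp (2 * π * I * z) ^ n := by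
  rw [← Complex.exp_nat_mul]
  ring_nf

theorem exp_two_pi_I_neg_natCast_succ_mul (n : ℕ) (z : ℂ) :
    Complex.exp (2 * π * I * ((-(n + 1) : ℤ) : ℂ) * z) =
      Complex.exp (2 * π * I * ((n + 1 : ℕ) : ℂ) * -z) := by
  push_cast
  ring_nf

theorem norm_exp_two_pi_I_mul_lt_one {z : ℂ} (hz : 0 < z.im) :
    ‖Complex.exp (2 * π * I * z)‖ < 1 :=
  UpperHalfPlane.norm_exp_two_pi_I_lt_one ⟨z, hz⟩

theorem summable_pow_mul_exp_two_pi_I_mul (p : ℕ) {z : ℂ} (hz : 0 < z.im) :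
    Summable fun n : ℕ ↦ (n : ℂ) ^ p * Complex.exp (2 * π * I * n * z) := by
  simpa only [exp_two_pi_I_natCast_mul] using
    summable_pow_mul_geometric_of_norm_lt_one p (norm_exp_two_pi_I_mul_lt_one hz)

theorem hasSum_one_div_add_intCast_pow {p : ℕ} (hp : 1 ≤ p) {z : ℂ} (hz : 0 < z.im) :
    HasSum (fun m : ℤ ↦ 1 / (z + m) ^ (p + 1)) ((-(2 * π * I)) ^ (p + 1) / p.factorial *
      ∑' n : ℕ, (n : ℂ) ^ p * Complex.exp (2 * π * I * n * z)) := by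
  have hsum : Summable fun m : ℤ ↦ 1 / (z + m) ^ (p + 1) := by
    simpa only [Int.cast_one, one_mul, zpow_natCast, ← one_div] using
      EisensteinSeries.linear_right_summable z 1 (k := (p + 1 : ℕ)) (by omega)
  have hvalue := EisensteinSeries.qExpansion_identity hp ⟨z, hz⟩
  simp only [exp_two_pi_I_natCast_mul, ← neg_mul]
  exact hvalue ▸ hsum.hasSum

theorem hasSum_one_div_add_intCast_pow_of_im_neg {p : ℕ} (hp : 1 ≤ p) {z : ℂ} (hz : z.im < 0) :
    HasSum (fun m : ℤ ↦ 1 / (z + m) ^ (p + 1)) ((2 * π * I) ^ (p + 1) / p.factorial *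
      ∑' n : ℕ, (n : ℂ) ^ p * Complex.exp (2 * π * I * n * -z)) := by
  have h := hasSum_one_div_add_intCast_pow hp (z := -z) (by simpa using hz)
  have hsign : ((-1 : ℂ) ^ (p + 1)) * (-1) ^ (p + 1) = 1 := by simp [← mul_pow]
  convert! ((Equiv.neg ℤ).hasSum_iff.2 h).mul_left ((-1) ^ (p + 1)) using 1
  · funext m
    rw [Function.comp_apply, Equiv.neg_apply, Int.cast_neg, ← neg_add, neg_pow (z + m),
      ← div_div, ← mul_div_assoc, ← mul_div_assoc, mul_one,
      div_self (pow_ne_zero _ (neg_ne_zero.2 one_ne_zero))]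
  · rw [neg_pow (2 * π * I)]
    linear_combination (-(2 * π * I) ^ (p + 1) / p.factorial *
      ∑' n : ℕ, (n : ℂ) ^ p * Complex.exp (2 * π * I * n * -z)) * hsign

end OnePole

section Cotangent

theorem hasSum_exp_two_pi_I_mul {z : ℂ} (hz : 0 < z.im) :
    HasSum (fun n : ℕ ↦ 2 * π * I * Complex.exp (2 * π * I * n * z))
      (π * I - π * Complex.cot (π * z)) := by
  convert! (summable_pow_mul_exp_two_pi_I_mul 0 hz).hasSum.mul_left (2 * π * I) using 1
  · simp only [pow_zero, one_mul]
  · simp only [pow_zero, one_mul, exp_two_pi_I_natCast_mul]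
    linear_combination -pi_mul_cot_pi_q_exp ⟨z, hz⟩

theorem hasSum_exp_two_pi_I_mul_of_im_neg {z : ℂ} (hz : z.im < 0) :
    HasSum (fun n : ℕ ↦ 2 * π * I * Complex.exp (2 * π * I * ((-(n + 1) : ℤ) : ℂ) * z))
      (π * Complex.cot (π * z) - π * I) := by
  have h := hasSum_exp_two_pi_I_mul (z := -z) (by simpa using hz)
  simp only [exp_two_pi_I_neg_natCast_succ_mul]
  convert! (hasSum_nat_add_iff' 1).2 h using 1
  simp [Complex.cot_eq_cos_div_sin, div_neg]
  ring

theorem mem_integerComplement_of_im_ne_zero {z : ℂ} (hz : z.im ≠ 0) : z ∈ integerComplement := by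
  rintro ⟨m, rfl⟩
  exact hz (intCast_im m)

theorem hasSum_one_div_add_add_one_div_sub {z : ℂ} (hz : z ∈ integerComplement) :
    HasSum (fun n : ℕ ↦ 1 / (z + n) + 1 / (z - n)) (π * Complex.cot (π * z) + 1 / z) := by
  rw [← hasSum_nat_add_iff' 1]
  convert! (summable_cotTerm hz).hasSum using 1
  · funext n
    simp only [cotTerm]
    push_cast
    ring
  · simp only [cotTerm, ← cot_series_rep' hz, Finset.sum_range_one, Nat.cast_zero]
    ring

theorem hasSum_one_div_mul_of_mem_integerComplement {τ σ : ℂ} (hτ : τ ∈ integerComplement)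
    (hσ : σ ∈ integerComplement) (h : τ - σ ≠ 0) :
    HasSum (fun m : ℤ ↦ 1 / ((τ + m) * (σ + m)))
      ((π * Complex.cot (π * σ) - π * Complex.cot (π * τ)) / (τ - σ)) := by
  have hsum : Summable fun m : ℤ ↦ 1 / ((τ + m) * (σ + m)) := by
    simp only [one_div]
    refine EisensteinSeries.summable_inv_of_isBigO_rpow_inv (a := 2) (by norm_cast) ?_
    simpa [pow_two] using (EisensteinSeries.linear_inv_isBigO_right 1 σ).mul
      (EisensteinSeries.linear_inv_isBigO_right 1 τ)
  have hsplit (m : ℤ) : 1 / ((τ + m) * (σ + m)) = (1 / (σ + m) - 1 / (τ + m)) / (τ - σ) := by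
    have := integerComplement_add_ne_zero hτ m
    have := integerComplement_add_ne_zero hσ m
    field_simp
    ring
  have hcot := ((hasSum_one_div_add_add_one_div_sub hσ).sub
    (hasSum_one_div_add_add_one_div_sub hτ)).div_const (τ - σ)
  have hvalue := hsum.hasSum.nat_add_neg.unique (by
    convert! hcot using 1
    funext n
    simp only [hsplit]
    push_cast
    ring)
  convert! hsum.hasSum using 1
  have h0 := hsplit 0
  simp only [Int.cast_zero, add_zero] at h0 hvalue
  linear_combination -hvalue + h0

end Cotangent

section LipschitzPair

/-- The summands of the Lipschitz sum, paired with what should be their Fourier transform at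
`n : ℤ`. Closing the contour of `∫ φ_n` in the lower or upper half plane, according to the sign of
`n`, picks the residue at `-τ` for `n ≥ 0` and the one at `-σ` for `n < 0`. -/
noncomputable def lipschitzPair (τ σ : ℂ) (k l : ℤ) : (ℤ → ℂ) × (ℤ → ℂ) where
  fst m := 1 / ((τ + m) ^ k * (σ + m) ^ l)
  snd n := if 0 ≤ n then -(2 * π * I) * poleResidue τ σ k l n
    else 2 * π * I * poleResidue σ τ l k n

section Coefficients

variable (τ σ : ℂ) (k l : ℤ) (n : ℕ)

theorem lipschitzPair_snd_natCast :
    (lipschitzPair τ σ k l).2 n = -(2 * π * I) * poleResidue τ σ k l n := by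
  simp [lipschitzPair]

theorem lipschitzPair_snd_neg_natCast_succ :
    (lipschitzPair τ σ k l).2 (-(n + 1)) = 2 * π * I * poleResidue σ τ l k (-(n + 1)) := by
  simp [lipschitzPair, show ¬(0 : ℤ) ≤ -1 + -n by omega]

end Coefficients

variable {τ σ : ℂ}

theorem lipschitzPair_mem_equalSums {k l : ℤ} {s t : ℂ}
    (h : HasSum (fun m : ℤ ↦ 1 / ((τ + m) ^ k * (σ + m) ^ l)) (s + t))
    (hs : HasSum (fun n : ℕ ↦ -(2 * π * I) * poleResidue τ σ k l n) s)
    (ht : HasSum (fun n : ℕ ↦ 2 * π * I * poleResidue σ τ l k (-(n + 1))) t) :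
    lipschitzPair τ σ k l ∈ equalSums ℂ ℤ ℤ ℂ :=
  ⟨s + t, h, .of_nat_of_neg_add_one (by simpa only [lipschitzPair_snd_natCast] using hs)
    (by simpa only [lipschitzPair_snd_neg_natCast_succ] using ht)⟩

theorem sub_smul_lipschitzPair (hτ : τ ∈ integerComplement) (hσ : σ ∈ integerComplement)
    (h : τ - σ ≠ 0) (k l : ℤ) :
    (τ - σ) • lipschitzPair τ σ k l =
      lipschitzPair τ σ (k - 1) l - lipschitzPair τ σ k (l - 1) := by
  refine Prod.ext (funext fun m ↦ ?_) (funext fun n ↦ ?_)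
  · have hτm := integerComplement_add_ne_zero hτ m
    have hσm := integerComplement_add_ne_zero hσ m
    have := zpow_ne_zero k hτm
    have := zpow_ne_zero l hσm
    simp only [lipschitzPair, Prod.smul_mk, Prod.mk_sub_mk, Pi.smul_apply, Pi.sub_apply,
      smul_eq_mul, zpow_sub_one₀ hτm, zpow_sub_one₀ hσm]
    field_simp
    ring
  · have hlower := sub_mul_poleResidue l n (τ := τ) (σ := σ) (by rwa [← neg_sub, neg_ne_zero]) k
    have hupper := sub_mul_poleResidue k n h l
    simp only [lipschitzPair, Prod.smul_mk, Prod.mk_sub_mk, Pi.smul_apply, Pi.sub_apply,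
      smul_eq_mul]
    split_ifs
    · linear_combination 2 * π * I * hlower
    · linear_combination 2 * π * I * hupper

theorem sub_ne_zero_of_im_pos_of_im_neg (hτ : 0 < τ.im) (hσ : σ.im < 0) : τ - σ ≠ 0 :=
  sub_ne_zero.2 fun h ↦ (hσ.trans hτ).ne' (congrArg im h)

theorem lipschitzPair_zero_right_mem_equalSums (hτ : 0 < τ.im) (σ : ℂ) {k : ℤ} (hk : 2 ≤ k) :
    lipschitzPair τ σ k 0 ∈ equalSums ℂ ℤ ℤ ℂ := by
  obtain ⟨p, rfl⟩ : ∃ p : ℕ, k = (p + 1 : ℕ) := ⟨(k - 1).toNat, by omega⟩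
  have hexp := (summable_pow_mul_exp_two_pi_I_mul p hτ).hasSum.mul_left
    ((-(2 * π * I)) ^ (p + 1) / p.factorial)
  refine lipschitzPair_mem_equalSums (t := 0) ?_ (hexp.congr_fun fun n ↦ ?_) ?_
  · simpa only [zpow_natCast, zpow_zero, mul_one, add_zero] using
      hasSum_one_div_add_intCast_pow (p := p) (by omega) hτ
  · rw [poleResidue_natCast_succ_zero, ← neg_mul, mul_pow, Int.cast_natCast]
    ring
  · simp [poleResidue_of_nonpos]

theorem lipschitzPair_zero_left_mem_equalSums (τ : ℂ) (hσ : σ.im < 0) {l : ℤ} (hl : 2 ≤ l) :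
    lipschitzPair τ σ 0 l ∈ equalSums ℂ ℤ ℤ ℂ := by
  obtain ⟨p, rfl⟩ : ∃ p : ℕ, l = (p + 1 : ℕ) := ⟨(l - 1).toNat, by omega⟩
  have hexp := (summable_pow_mul_exp_two_pi_I_mul p (z := -σ) (by simpa using hσ)).hasSum
  have hexp_succ := ((hasSum_nat_add_iff' 1).2 hexp).mul_left
    ((2 * π * I) ^ (p + 1) / p.factorial)
  refine lipschitzPair_mem_equalSums (s := 0) ?_ ?_ (hexp_succ.congr_fun fun n ↦ ?_)
  · simpa only [zpow_natCast, zpow_zero, one_mul, zero_add, Finset.sum_range_one, Nat.cast_zero,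
      zero_pow (show p ≠ 0 by omega), zero_mul, sub_zero] using
      hasSum_one_div_add_intCast_pow_of_im_neg (p := p) (by omega) hσ
  · simp [poleResidue_of_nonpos]
  · rw [poleResidue_natCast_succ_zero, exp_two_pi_I_neg_natCast_succ_mul,
      show -(2 * π * I * ((-(n + 1) : ℤ) : ℂ)) = 2 * π * I * (n + 1 : ℕ) by push_cast; ring,
      mul_pow]
    ring

theorem lipschitzPair_one_one_mem_equalSums (hτ : 0 < τ.im) (hσ : σ.im < 0) :
    lipschitzPair τ σ 1 1 ∈ equalSums ℂ ℤ ℤ ℂ := by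
  have hcot := hasSum_one_div_mul_of_mem_integerComplement
    (mem_integerComplement_of_im_ne_zero hτ.ne') (mem_integerComplement_of_im_ne_zero hσ.ne)
    (sub_ne_zero_of_im_pos_of_im_neg hτ hσ)
  have hlower := (hasSum_exp_two_pi_I_mul hτ).div_const (τ - σ)
  have hupper := (hasSum_exp_two_pi_I_mul_of_im_neg hσ).div_const (τ - σ)
  refine lipschitzPair_mem_equalSums ?_ (hlower.congr_fun fun n ↦ ?_) (hupper.congr_fun fun n ↦ ?_)
  · convert! hcot using 1
    · simp only [zpow_one]
    · ring
  · rw [poleResidue_one_one, Int.cast_natCast, ← neg_sub τ σ, div_neg]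
    ring
  · rw [poleResidue_one_one]
    ring

theorem lipschitzPair_mem_equalSums_of_two_le_add (hτ : 0 < τ.im) (hσ : σ.im < 0) {k l : ℤ}
    (hkl : 2 ≤ k + l) : lipschitzPair τ σ k l ∈ equalSums ℂ ℤ ℤ ℂ :=
  mem_of_two_le_add (sub_ne_zero_of_im_pos_of_im_neg hτ hσ)
    (sub_smul_lipschitzPair (mem_integerComplement_of_im_ne_zero hτ.ne')
      (mem_integerComplement_of_im_ne_zero hσ.ne) (sub_ne_zero_of_im_pos_of_im_neg hτ hσ))
    (fun _ ↦ lipschitzPair_zero_right_mem_equalSums hτ σ)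
    (fun _ ↦ lipschitzPair_zero_left_mem_equalSums τ hσ)
    (lipschitzPair_one_one_mem_equalSums hτ hσ) hkl

end LipschitzPair

theorem lipschitz_summation_general {k l : ℤ} (hkl : 2 ≤ k + l) {τ σ : ℂ} (hτ : 0 < τ.im)
    (hσ : σ.im < 0) :
    HasSum (fun m : ℤ ↦ 1 / ((τ + m) ^ k * (σ + m) ^ l))
      (-(2 * π * I) *
        ∑' n : ℕ, ∑ r ∈ Finset.range k.toNat,
          fchoose (-l : ℂ) r * (-(2 * π * I * n)) ^ (k.toNat - 1 - r) *
            Complex.exp (2 * π * I * n * τ) /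
              ((σ - τ) ^ (l + r) * ((k.toNat - 1 - r).factorial : ℂ)) +
      2 * π * I *
        ∑' n : ℕ, ∑ r ∈ Finset.range l.toNat,
          fchoose (-k : ℂ) r * (-(2 * π * I * ((-(n + 1) : ℤ) : ℂ))) ^ (l.toNat - 1 - r) *
            Complex.exp (2 * π * I * ((-(n + 1) : ℤ) : ℂ) * σ) /
              ((τ - σ) ^ (k + r) * ((l.toNat - 1 - r).factorial : ℂ))) := by
  obtain ⟨s, hsum, hcoeff⟩ := lipschitzPair_mem_equalSums_of_two_le_add hτ hσ hkl
  have hs := tsum_of_nat_of_neg_add_one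
    (hcoeff.summable.comp_injective Nat.cast_injective)
    (hcoeff.summable.comp_injective (i := fun n : ℕ ↦ -((n : ℤ) + 1)) fun a b hab ↦ by grind)
  simp only [lipschitzPair_snd_natCast, lipschitzPair_snd_neg_natCast_succ,
    tsum_mul_left, poleResidue, Int.cast_natCast] at hs
  exact hs ▸ hcoeff.tsum_eq ▸ hsum

/-- Lipschitz-type summation formula: for integers `k, ℓ` with `k + ℓ ≥ 2` and
`τ = u + iv` with `v > 0`,
`∑_{m ∈ ℤ} 1/((τ+m)^k (τ̄+m)^ℓ)` equals the stated combination of exponential sums. -/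
theorem lipschitz_summation (k l : ℤ) (hkl : 2 ≤ k + l) (u v : ℝ) (hv : 0 < v) :
    (∑' m : ℤ,
        1 / (((u : ℂ) + v * Complex.I + m) ^ k *
          ((u : ℂ) - v * Complex.I + m) ^ l)) =
      (-(2 * π * Complex.I)) *
        ∑' n : ℕ, ∑ r ∈ Finset.range k.toNat,
          fchoose (-l : ℂ) r * (-(2 * π * Complex.I * n)) ^ (k.toNat - 1 - r) *
            Complex.exp (2 * π * Complex.I * n * ((u : ℂ) + v * Complex.I)) /
              ((-(2 * Complex.I * v)) ^ (l + r) * ((k.toNat - 1 - r).factorial : ℂ)) +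
      (2 * π * Complex.I) *
        ∑' n : ℕ, ∑ r ∈ Finset.range l.toNat,
          fchoose (-k : ℂ) r *
            (-(2 * π * Complex.I * ((-(n + 1) : ℤ) : ℂ))) ^ (l.toNat - 1 - r) *
            Complex.exp (2 * π * Complex.I * ((-(n + 1) : ℤ) : ℂ) *
              ((u : ℂ) - v * Complex.I)) /
              ((2 * Complex.I * v) ^ (k + r) * ((l.toNat - 1 - r).factorial : ℂ)) := by
  have hτσ : -(2 * I * v) = (u - v * I : ℂ) - (u + v * I) := by ring
  have hστ : 2 * I * v = (u + v * I : ℂ) - (u - v * I) := by ring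
  rw [hτσ, hστ]
  exact (lipschitz_summation_general hkl (by simpa using hv) (by simpa using hv)).tsum_eq
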